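/- Let u : A → B be a morphism of noetherian rings, M a finitely generated A-module, N a finitely generated B-module which is flat as an A-module, and n a natural number. Consider M ⊗_A N as a B-module. If M satisfies Serre's condition (S_n) and for every P ∈ Supp(M) the fiber module N_P/PN_P satisfies (S_n) as a module over B_P/PB_P, then M ⊗_A N satisfies the condition (C_{n+1}) as a B-module. -/

import Mathlib

noncomputable section

open TensorProduct

universe u v w





/-- The depth of the ideal `I` on the module `M`: the supremum of lengths of
`M`-regular sequences with entries in `I`. -/
noncomputable def idealDepth (A : Type u) [CommRing A] (I : Ideal A)
    (M : Type v) [AddCommGroup M] [Module A M] : ℕ∞ :=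
  sSup {n : ℕ∞ | ∃ rs : List A, (rs.length : ℕ∞) = n ∧ (∀ r ∈ rs, r ∈ I) ∧
    RingTheory.Sequence.IsRegular M rs}

/-- The depth of a module over a local ring. -/
noncomputable def localDepth (A : Type u) [CommRing A] [IsLocalRing A]
    (M : Type v) [AddCommGroup M] [Module A M] : ℕ∞ :=
  idealDepth A (IsLocalRing.maximalIdeal A) M

/-- The (Krull) dimension of a module, i.e. the Krull dimension of its support. -/
noncomputable def supportDim (A : Type u) [CommRing A]
    (M : Type v) [AddCommGroup M] [Module A M] : WithBot ℕ∞ :=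
  Order.krullDim (Module.support A M)

/-- `depth (M_P)` : the depth of the localization of `M` at a prime `P`,
over the local ring `A_P`. -/
noncomputable def depthAt (A : Type u) [CommRing A]
    (M : Type v) [AddCommGroup M] [Module A M] (P : PrimeSpectrum A) : ℕ∞ :=
  localDepth (Localization.AtPrime P.asIdeal) (LocalizedModule P.asIdeal.primeCompl M)

/-- `ht_M(P) = dim (M_P)` : the height of a prime `P` in the support of `M`,
i.e. the dimension of the localized module `M_P` over `A_P`. -/
noncomputable def heightAt (A : Type u) [CommRing A]
    (M : Type v) [AddCommGroup M] [Module A M] (P : PrimeSpectrum A) : WithBot ℕ∞ :=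
  supportDim (Localization.AtPrime P.asIdeal) (LocalizedModule P.asIdeal.primeCompl M)

/-- Serre's condition `(S_n)` for a module: for every `P` in the support,
`depth (M_P) ≥ min (n, ht_M(P))`. -/
def SerreCondS (A : Type u) [CommRing A] (n : ℕ)
    (M : Type v) [AddCommGroup M] [Module A M] : Prop :=
  ∀ P ∈ Module.support A M,
    min (n : WithBot ℕ∞) (heightAt A M P) ≤ (depthAt A M P : WithBot ℕ∞)

/-- The condition `(C_n)` for a module: for every `P` in the support,
`depth (M_P) ≥ min (n, ht_M(P)) - 1`, equivalently
`min (n, ht_M(P)) ≤ depth (M_P) + 1`. -/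
def CondC (A : Type u) [CommRing A] (n : ℕ)
    (M : Type v) [AddCommGroup M] [Module A M] : Prop :=
  ∀ P ∈ Module.support A M,
    min (n : WithBot ℕ∞) (heightAt A M P) ≤ (depthAt A M P : WithBot ℕ∞) + 1

/-- A module `M` is almost Cohen-Macaulay if `depth(P, M) = depth (M_P)` for every
`P` in the support of `M` (Kang's definition). -/
def IsAlmostCMModule (A : Type u) [CommRing A]
    (M : Type v) [AddCommGroup M] [Module A M] : Prop :=
  ∀ P ∈ Module.support A M, idealDepth A P.asIdeal M = depthAt A M P

/-- A module `M` is Cohen-Macaulay if `depth (M_P) = dim (M_P)` for every `P` in its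
support. -/
def IsCMModule (A : Type u) [CommRing A]
    (M : Type v) [AddCommGroup M] [Module A M] : Prop :=
  ∀ P ∈ Module.support A M, (depthAt A M P : WithBot ℕ∞) = heightAt A M P

/-- A ring is almost Cohen-Macaulay if it is an almost Cohen-Macaulay module over
itself. -/
abbrev IsAlmostCMRing (A : Type u) [CommRing A] : Prop := IsAlmostCMModule A A

/-- A ring is Cohen-Macaulay if it is a Cohen-Macaulay module over itself, i.e. all its
localizations at primes have depth equal to dimension. -/
abbrev IsCMRing (A : Type u) [CommRing A] : Prop := IsCMModule A A

/-- A ring satisfies `(C_n)` if it does so as a module over itself. -/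
abbrev RingCondC (A : Type u) [CommRing A] (n : ℕ) : Prop := CondC A n A

/-- A ring satisfies `(S_n)` if it does so as a module over itself. -/
abbrev RingSerreCondS (A : Type u) [CommRing A] (n : ℕ) : Prop := SerreCondS A n A






variable (A : Type u) [CommRing A] (B : Type u) [CommRing B] [Algebra A B]

/-- The image in `B` of the complement of a prime `P` of `A`, as a submonoid of `B`. -/
noncomputable def fiberSubmonoid (P : PrimeSpectrum A) : Submonoid B :=
  Submonoid.map (algebraMap A B) P.asIdeal.primeCompl

/-- `PB_P` : the extension of the prime `P` of `A` to the localization `B_P` of `B`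
at (the image of) the complement of `P`. -/
noncomputable def fiberIdeal (P : PrimeSpectrum A) :
    Ideal (Localization (fiberSubmonoid A B P)) :=
  Ideal.map ((algebraMap B (Localization (fiberSubmonoid A B P))).comp (algebraMap A B))
    P.asIdeal

/-- The fiber ring `B_P / P B_P` of `A → B` at a prime `P` of `A`. -/
noncomputable def fiberRing (P : PrimeSpectrum A) : Type u :=
  Localization (fiberSubmonoid A B P) ⧸ fiberIdeal A B P

noncomputable instance (P : PrimeSpectrum A) : CommRing (fiberRing A B P) :=
  inferInstanceAs (CommRing (Localization (fiberSubmonoid A B P) ⧸ fiberIdeal A B P))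

/-- The fiber module `N_P / P N_P` of a `B`-module `N` at a prime `P` of `A`. -/
noncomputable def fiberModule (P : PrimeSpectrum A)
    (N : Type u) [AddCommGroup N] [Module B N] : Type u :=
  LocalizedModule (fiberSubmonoid A B P) N ⧸
    (fiberIdeal A B P •
      (⊤ : Submodule (Localization (fiberSubmonoid A B P))
        (LocalizedModule (fiberSubmonoid A B P) N)))

noncomputable instance (P : PrimeSpectrum A) (N : Type u) [AddCommGroup N] [Module B N] :
    AddCommGroup (fiberModule A B P N) :=
  inferInstanceAs (AddCommGroup (LocalizedModule (fiberSubmonoid A B P) N ⧸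
    (fiberIdeal A B P •
      (⊤ : Submodule (Localization (fiberSubmonoid A B P))
        (LocalizedModule (fiberSubmonoid A B P) N)))))

/-- `N_P / P N_P` is a module over the fiber ring `B_P / P B_P`. -/
noncomputable instance (P : PrimeSpectrum A) (N : Type u) [AddCommGroup N] [Module B N] :
    Module (fiberRing A B P) (fiberModule A B P N) :=
  inferInstanceAs (Module (Localization (fiberSubmonoid A B P) ⧸ fiberIdeal A B P)
    (LocalizedModule (fiberSubmonoid A B P) N ⧸
      (fiberIdeal A B P •
        (⊤ : Submodule (Localization (fiberSubmonoid A B P))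
          (LocalizedModule (fiberSubmonoid A B P) N)))))








/-- The canonical `B`-module structure on `M ⊗[A] N`, where `N` is a `B`-module,
given by `b • (m ⊗ n) = m ⊗ (b • n)`. -/
noncomputable instance tensorRightModule (A : Type u) [CommRing A] (B : Type u) [CommRing B]
    [Algebra A B] (M : Type u) [AddCommGroup M] [Module A M]
    (N : Type u) [AddCommGroup N] [Module A N] [Module B N] [IsScalarTower A B N] :
    Module B (M ⊗[A] N) where
  smul b x := (TensorProduct.comm A M N).symm (b • TensorProduct.comm A M N x)
  one_smul x := by
    show (TensorProduct.comm A M N).symm ((1 : B) • TensorProduct.comm A M N x) = x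
    simp
  mul_smul a b x := by
    show (TensorProduct.comm A M N).symm ((a * b) • TensorProduct.comm A M N x) =
      (TensorProduct.comm A M N).symm (a • TensorProduct.comm A M N
        ((TensorProduct.comm A M N).symm (b • TensorProduct.comm A M N x)))
    simp [mul_smul]
  smul_zero b := by
    show (TensorProduct.comm A M N).symm (b • TensorProduct.comm A M N 0) = 0
    simp
  smul_add b x y := by
    show (TensorProduct.comm A M N).symm (b • TensorProduct.comm A M N (x + y)) =
      (TensorProduct.comm A M N).symm (b • TensorProduct.comm A M N x) +
      (TensorProduct.comm A M N).symm (b • TensorProduct.comm A M N y)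
    simp
  add_smul a b x := by
    show (TensorProduct.comm A M N).symm ((a + b) • TensorProduct.comm A M N x) =
      (TensorProduct.comm A M N).symm (a • TensorProduct.comm A M N x) +
      (TensorProduct.comm A M N).symm (b • TensorProduct.comm A M N x)
    simp [add_smul]
  zero_smul x := by
    show (TensorProduct.comm A M N).symm ((0 : B) • TensorProduct.comm A M N x) = 0
    simp



section LocalAlgebra

open RingTheory.Sequence IsLocalRing

variable {R S : Type*} [CommRing R] [CommRing S] [Algebra R S]
  {M N : Type*} [AddCommGroup M] [Module R M]
  [AddCommGroup N] [Module R N] [Module S N] [IsScalarTower R S N]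

/-- Tensoring on the right commutes with reduction modulo `y` of the left factor. -/
noncomputable def quotSMulTopTensorEquiv (y : S) :
    QuotSMulTop y N ⊗[R] M ≃ₗ[S] QuotSMulTop y (N ⊗[R] M) :=
  AlgebraTensorModule.congr
      (QuotSMulTop.equivQuotTensor y N) (LinearEquiv.refl R M) ≪≫ₗ
    AlgebraTensorModule.assoc R S S (S ⧸ Ideal.span {y}) N M ≪≫ₗ
    (QuotSMulTop.equivQuotTensor y (N ⊗[R] M)).symm

@[simp]
lemma quotSMulTopTensorEquiv_mk_tmul (y : S) (n : N) (m : M) :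
    quotSMulTopTensorEquiv y ((Submodule.Quotient.mk n : QuotSMulTop y N) ⊗ₜ[R] m) =
      Submodule.Quotient.mk (n ⊗ₜ m) := by
  rw [quotSMulTopTensorEquiv, LinearEquiv.trans_apply, LinearEquiv.trans_apply,
    LinearEquiv.symm_apply_eq]
  rfl

lemma finite_tensor [Module.Finite R M] [Module.Finite S N] : Module.Finite S (N ⊗[R] M) :=
  Module.Finite.equiv (AlgebraTensorModule.cancelBaseChange R S S N M)

lemma lTensor_subtype_mem_smul_top (I : Ideal R) (z : N ⊗[R] (I • ⊤ : Submodule R M)) :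
    (I • ⊤ : Submodule R M).subtype.lTensor N z ∈
      (I.map (algebraMap R S) • ⊤ : Submodule S (N ⊗[R] M)) := by
  induction z with
  | zero => simp
  | add a b ha hb => rw [map_add]; exact add_mem ha hb
  | tmul n m =>
    rw [LinearMap.lTensor_tmul, Submodule.subtype_apply]
    generalize hm' : (m : M) = m'
    have hm : m' ∈ (I • ⊤ : Submodule R M) := hm' ▸ m.2
    clear hm'
    induction hm using Submodule.smul_induction_on' with
    | smul r hr m _ =>
      rw [← TensorProduct.smul_tmul, ← algebraMap_smul S r n, ← TensorProduct.smul_tmul']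
      exact Submodule.smul_mem_smul (Ideal.mem_map_of_mem _ hr) trivial
    | add a _ b _ ha hb => rw [tmul_add]; exact add_mem ha hb

lemma ker_lTensor_mkQ_smul_top (I : Ideal R) :
    LinearMap.ker (AlgebraTensorModule.lTensor S N (I • ⊤ : Submodule R M).mkQ) =
      I.map (algebraMap R S) • ⊤ := by
  refine le_antisymm (fun z hz ↦ ?_) (Submodule.smul_le.mpr fun s hs z _ ↦ ?_)
  · obtain ⟨w, rfl⟩ := (lTensor_exact N (LinearMap.exact_subtype_mkQ (I • ⊤ : Submodule R M))
      (Submodule.mkQ_surjective _) z).mp hz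
    exact lTensor_subtype_mem_smul_top I w
  · rw [LinearMap.mem_ker, map_smul]
    suffices I.map (algebraMap R S) ≤
        Module.annihilator S (N ⊗[R] (M ⧸ (I • ⊤ : Submodule R M))) from
      Module.mem_annihilator.mp (this hs) _
    rw [Ideal.map_le_iff_le_comap]
    intro r hr
    rw [Ideal.mem_comap, Module.mem_annihilator]
    intro w
    induction w with
    | zero => simp
    | add a b ha hb => rw [smul_add, ha, hb, add_zero]
    | tmul n m =>
      obtain ⟨m, rfl⟩ := Submodule.Quotient.mk_surjective _ m
      rw [algebraMap_smul, ← TensorProduct.tmul_smul, ← Submodule.Quotient.mk_smul,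
        (Submodule.Quotient.mk_eq_zero _).mpr (Submodule.smul_mem_smul hr Submodule.mem_top),
        tmul_zero]

/-- Tensoring on the left commutes with reduction modulo `I` of the right factor. -/
noncomputable def quotientSMulTopTensorEquiv (I : Ideal R) :
    ((N ⊗[R] M) ⧸ (I.map (algebraMap R S) • ⊤ : Submodule S (N ⊗[R] M))) ≃ₗ[S]
      N ⊗[R] (M ⧸ (I • ⊤ : Submodule R M)) :=
  Submodule.quotEquivOfEq _ _ (ker_lTensor_mkQ_smul_top I).symm ≪≫ₗ
    LinearMap.quotKerEquivOfSurjective (AlgebraTensorModule.lTensor S N _)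
      (LinearMap.lTensor_surjective N (Submodule.mkQ_surjective _))

/-- The fiber `N ⧸ IN` as a tensor product. -/
noncomputable def quotientTensorFiberEquiv (I : Ideal R) :
    (N ⧸ (I.map (algebraMap R S) • ⊤ : Submodule S N)) ≃ₗ[S] N ⊗[R] (R ⧸ I) :=
  Submodule.Quotient.equiv _ _ (AlgebraTensorModule.rid R S N).symm
      (by rw [Submodule.map_smul'', Submodule.map_top, LinearEquiv.range]) ≪≫ₗ
    quotientSMulTopTensorEquiv I ≪≫ₗ
    AlgebraTensorModule.congr (LinearEquiv.refl S N)
      (Submodule.quotEquivOfEq _ _ (by rw [smul_eq_mul, Ideal.mul_top]))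

lemma support_tensor_subset [Module.Finite R M] [Module.Finite S N] {q : PrimeSpectrum S}
    (hq : q ∈ Module.support S (N ⊗[R] M)) :
    q ∈ Module.support S N ∧ q.comap (algebraMap R S) ∈ Module.support R M := by
  have := finite_tensor (R := R) (S := S) (M := M) (N := N)
  rw [Module.mem_support_iff_of_finite] at hq ⊢
  rw [Module.mem_support_iff_of_finite]
  constructor
  · refine le_trans (fun s hs ↦ Module.mem_annihilator.mpr fun w ↦ ?_) hq
    induction w with
    | zero => simp
    | add a b ha hb => rw [smul_add, ha, hb, add_zero]
    | tmul n m => rw [TensorProduct.smul_tmul', Module.mem_annihilator.mp hs, zero_tmul]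
  · intro r hr
    refine hq (Module.mem_annihilator.mpr fun w ↦ ?_)
    induction w with
    | zero => simp
    | add a b ha hb => rw [smul_add, ha, hb, add_zero]
    | tmul n m =>
      rw [algebraMap_smul, ← TensorProduct.tmul_smul, Module.mem_annihilator.mp hr, tmul_zero]

lemma isSMulRegular_tensor_of_exact [Module.Flat R N] {y : S}
    {M₁ M₂ M₃ : Type*} [AddCommGroup M₁] [Module R M₁] [AddCommGroup M₂] [Module R M₂]
    [AddCommGroup M₃] [Module R M₃] (f : M₁ →ₗ[R] M₂) (g : M₂ →ₗ[R] M₃)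
    (hf : Function.Injective f) (hfg : Function.Exact f g)
    (h₁ : IsSMulRegular (N ⊗[R] M₁) y) (h₃ : IsSMulRegular (N ⊗[R] M₃) y) :
    IsSMulRegular (N ⊗[R] M₂) y := by
  refine isSMulRegular_of_range_eq_ker (f := AlgebraTensorModule.lTensor S N f)
    (g := AlgebraTensorModule.lTensor S N g)
    (Module.Flat.lTensor_preserves_injective_linearMap f hf) ?_ h₁ h₃
  ext z
  exact (Module.Flat.lTensor_exact N hfg z).symm

lemma smul_top_eq_bot_of_injective {I : Ideal R} {M₁ M₂ : Type*} [AddCommGroup M₁] [Module R M₁]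
    [AddCommGroup M₂] [Module R M₂] (f : M₁ →ₗ[R] M₂) (hf : Function.Injective f)
    (h : I • (⊤ : Submodule R M₂) = ⊥) : I • (⊤ : Submodule R M₁) = ⊥ := by
  rw [eq_bot_iff, ← Submodule.map_le_map_iff_of_injective hf, Submodule.map_smul'',
    Submodule.map_bot, ← h]
  exact Submodule.smul_mono le_rfl le_top

lemma smul_top_eq_bot_of_surjective {I : Ideal R} {M₁ M₂ : Type*} [AddCommGroup M₁] [Module R M₁]
    [AddCommGroup M₂] [Module R M₂] (f : M₁ →ₗ[R] M₂) (hf : Function.Surjective f)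
    (h : I • (⊤ : Submodule R M₁) = ⊥) : I • (⊤ : Submodule R M₂) = ⊥ := by
  rw [← LinearMap.range_eq_top.mpr hf, ← Submodule.map_top, ← Submodule.map_smul'', h,
    Submodule.map_bot]

lemma isSMulRegular_tensor_of_pow_smul_eq_bot [IsLocalRing R] [IsNoetherianRing R]
    [Module.Flat R N] [Module.Finite R M] {y : S}
    (hy : IsSMulRegular (N ⊗[R] (R ⧸ maximalIdeal R)) y) (k : ℕ)
    (hM : maximalIdeal R ^ k • (⊤ : Submodule R M) = ⊥) : IsSMulRegular (N ⊗[R] M) y := by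
  revert hM
  induction ‹Module.Finite R M› using
    IsNoetherianRing.induction_on_isQuotientEquivQuotientPrime R with
  | subsingleton L =>
    intro _
    exact Function.injective_of_subsingleton _
  | quotient L p e =>
    intro h
    have h' := smul_top_eq_bot_of_surjective e.toLinearMap e.surjective h
    have hle : maximalIdeal R ≤ p.1 := by
      refine p.2.le_of_pow_le (n := k) fun r hr ↦ ?_
      have := Submodule.smul_mem_smul hr (Submodule.mem_top (x := (1 : R ⧸ p.1)))
      rw [h', Submodule.mem_bot] at this
      rw [← Ideal.Quotient.eq_zero_iff_mem]
      simpa [Algebra.smul_def] using this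
    have heq : p.1 = maximalIdeal R := le_antisymm (le_maximalIdeal p.2.ne_top) hle
    let e' : L ≃ₗ[R] R ⧸ maximalIdeal R := e ≪≫ₗ Submodule.quotEquivOfEq _ _ heq
    exact ((AlgebraTensorModule.congr (LinearEquiv.refl S N) e').isSMulRegular_congr y).mpr hy
  | exact L₁ L₂ L₃ f g hf hg hfg h₁ h₃ =>
    intro h
    exact isSMulRegular_tensor_of_exact f g hf hfg (h₁ (smul_top_eq_bot_of_injective f hf h))
      (h₃ (smul_top_eq_bot_of_surjective g hg h))

lemma supportDim_tensor_le_fiber_of_mem_minimalPrimes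
    [IsLocalRing R] [Module.Finite R M] [Module.Finite S N]
    (h : maximalIdeal R ∈ (Module.annihilator R M).minimalPrimes) :
    Module.supportDim S (N ⊗[R] M) ≤ Module.supportDim S (N ⊗[R] (R ⧸ maximalIdeal R)) := by
  rw [← Module.supportDim_eq_of_equiv (quotientTensorFiberEquiv (maximalIdeal R))]
  refine Order.krullDim_le_of_strictMono
    (Set.inclusion (t := Module.support S (N ⧸ _)) fun q hq ↦ ?_) fun _ _ h ↦ h
  obtain ⟨h₁, h₂⟩ := support_tensor_subset hq
  rw [Module.support_quotient]
  refine ⟨h₁, ?_⟩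
  rw [Module.mem_support_iff_of_finite] at h₂
  have := h.2 ⟨(q.comap (algebraMap R S)).2, h₂⟩ (le_maximalIdeal (q.comap _).2.ne_top)
  exact Ideal.map_le_iff_le_comap.mpr this

variable [IsLocalRing R] [IsNoetherianRing R] [IsLocalRing S] [IsNoetherianRing S]
  [IsLocalHom (algebraMap R S)] [Module.Finite R M] [Module.Finite S N]

lemma isSMulRegular_tensor_of_isSMulRegular_fiber [Module.Flat R N] {y : S}
    (hy : IsSMulRegular (N ⊗[R] (R ⧸ maximalIdeal R)) y) : IsSMulRegular (N ⊗[R] M) y := by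
  refine IsSMulRegular.of_right_eq_zero_of_smul fun z hz ↦ ?_
  have hne : (maximalIdeal R).map (algebraMap R S) ≠ ⊤ :=
    (lt_of_le_of_lt (Ideal.map_le_iff_le_comap (K := maximalIdeal S).mpr
      fun r hr ↦ map_nonunit (algebraMap R S) r hr)
      (maximalIdeal.isMaximal S).ne_top.lt_top).ne
  have := finite_tensor (R := R) (S := S) (M := M) (N := N)
  rw [← Submodule.mem_bot S, ← Ideal.iInf_pow_smul_eq_bot_of_isLocalRing _ hne,
    Submodule.mem_iInf]
  intro k
  let L : Submodule R M := maximalIdeal R ^ k • ⊤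
  have hL : IsSMulRegular (N ⊗[R] (M ⧸ L)) y := by
    refine isSMulRegular_tensor_of_pow_smul_eq_bot hy k ?_
    rw [eq_bot_iff, ← Submodule.range_mkQ L, ← Submodule.map_top, ← Submodule.map_smul'']
    rintro _ ⟨x, hx, rfl⟩
    simpa [L] using hx
  have h0 : L.mkQ.lTensor N z = 0 := by
    refine hL.right_eq_zero_of_smul ?_
    have := (AlgebraTensorModule.lTensor S N L.mkQ).map_smul y z
    rw [hz, map_zero] at this
    exact this.symm
  obtain ⟨w, rfl⟩ := ((lTensor_exact N (LinearMap.exact_subtype_mkQ L) L.mkQ_surjective) z).mp h0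
  rw [← Ideal.map_pow]
  exact lTensor_subtype_mem_smul_top _ w

lemma flat_quotSMulTop_of_isSMulRegular_fiber [Module.Flat R N] {y : S}
    (hy : IsSMulRegular (N ⊗[R] (R ⧸ maximalIdeal R)) y) : Module.Flat R (QuotSMulTop y N) := by
  refine Module.Flat.iff_lTensor_injective'.mpr fun I ↦ ?_
  let f := AlgebraTensorModule.lTensor S N I.subtype
  have h₁ : Function.Exact (0 : PUnit →ₗ[S] _) f :=
    (LinearMap.exact_zero_iff_injective _ _).mpr
      (Module.Flat.lTensor_preserves_injective_linearMap I.subtype I.injective_subtype)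
  have h₂ : Function.Exact f (AlgebraTensorModule.lTensor S N I.mkQ) :=
    Module.Flat.lTensor_exact N (LinearMap.exact_subtype_mkQ I)
  have h₃ := QuotSMulTop.map_first_exact_on_four_term_exact_of_isSMulRegular_last h₁ h₂
    (isSMulRegular_tensor_of_isSMulRegular_fiber hy)
  rw [map_zero, LinearMap.exact_zero_iff_injective] at h₃
  have h₄ : (QuotSMulTop.map y f) ∘ₗ (quotSMulTopTensorEquiv y).toLinearMap =
      (quotSMulTopTensorEquiv y).toLinearMap ∘ₗ AlgebraTensorModule.lTensor S _ I.subtype := by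
    ext n i
    simp [f]
  have h₅ := h₃.comp (quotSMulTopTensorEquiv y).injective
  rw [← LinearEquiv.coe_coe, ← LinearMap.coe_comp, h₄, LinearMap.coe_comp] at h₅
  exact h₅.of_comp

theorem isWeaklyRegular_tensor [Module.Flat R N] {ys : List S} {xs : List R}
    (hys : IsWeaklyRegular (N ⊗[R] (R ⧸ maximalIdeal R)) ys) (hxs : IsWeaklyRegular M xs) :
    IsWeaklyRegular (N ⊗[R] M) (ys ++ xs.map (algebraMap R S)) := by
  induction ys generalizing N with
  | nil =>
    rw [List.nil_append, isWeaklyRegular_map_algebraMap_iff]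
    exact hxs.isWeaklyRegular_lTensor
  | cons y ys ih =>
    rw [isWeaklyRegular_cons_iff] at hys
    rw [List.cons_append, isWeaklyRegular_cons_iff]
    have := flat_quotSMulTop_of_isSMulRegular_fiber hys.1
    refine ⟨isSMulRegular_tensor_of_isSMulRegular_fiber hys.1, ?_⟩
    rw [← (quotSMulTopTensorEquiv y).isWeaklyRegular_congr]
    exact ih (((quotSMulTopTensorEquiv y).isWeaklyRegular_congr _).mpr hys.2)

lemma exists_mem_maximalIdeal_notMem_minimalPrimes
    {I : Ideal R} (h : maximalIdeal R ∉ I.minimalPrimes) :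
    ∃ x ∈ maximalIdeal R, ∀ p ∈ I.minimalPrimes, x ∉ p := by
  by_contra! H
  obtain ⟨p, hp, hle⟩ := (Ideal.subset_union_prime_finite
    I.finite_minimalPrimes_of_isNoetherianRing (f := id) ⊥ ⊥ fun p hp _ _ ↦ hp.1.1).mp
      fun x hx ↦ by simpa using H x hx
  exact h (((maximalIdeal.isMaximal R).eq_of_le hp.1.1.ne_top hle) ▸ hp)

theorem supportDim_tensor_le :
    Module.supportDim S (N ⊗[R] M) ≤
      Module.supportDim R M + Module.supportDim S (N ⊗[R] (R ⧸ maximalIdeal R)) := by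
  obtain ⟨d, hd⟩ : ∃ d : ℕ, Module.supportDim R M < d := by
    have h := (Module.supportDim_le_ringKrullDim R M).trans_lt ringKrullDim_lt_top
    generalize Module.supportDim R M = e at h ⊢
    cases e using WithBot.recBotCoe with
    | bot => exact ⟨0, WithBot.bot_lt_coe _⟩
    | coe e =>
      lift e to ℕ using (WithBot.coe_lt_coe.mp h).ne
      exact ⟨e + 1, by exact_mod_cast Nat.lt_succ_self e⟩
  induction d generalizing M with
  | zero =>
    have : Subsingleton M := by
      rw [← Module.supportDim_eq_bot_iff_subsingleton R]
      exact (WithBot.lt_zero_iff_eq_bot _).mp hd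
    rw [Module.supportDim_eq_bot_of_subsingleton S]
    exact bot_le
  | succ d ih =>
    rcases subsingleton_or_nontrivial M with hM | hM
    · rw [Module.supportDim_eq_bot_of_subsingleton S (N ⊗[R] M)]
      exact bot_le
    by_cases h : maximalIdeal R ∈ (Module.annihilator R M).minimalPrimes
    · exact (supportDim_tensor_le_fiber_of_mem_minimalPrimes h).trans
        (le_add_of_nonneg_left (Order.krullDim_nonneg_iff.mpr
          Module.nonempty_support_of_nontrivial.to_subtype))
    · obtain ⟨x, hx, hxp⟩ := exists_mem_maximalIdeal_notMem_minimalPrimes h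
      have h₁ := Module.supportDim_quotSMulTop_succ_eq_of_notMem_minimalPrimes_of_mem_maximalIdeal
        hxp hx
      have := finite_tensor (R := R) (S := S) (M := M) (N := N)
      have h₂ := Module.supportDim_le_supportDim_quotSMulTop_succ (R := S) (M := N ⊗[R] M)
        (map_nonunit (algebraMap R S) x hx)
      let e : QuotSMulTop (algebraMap R S x) (N ⊗[R] M) ≃ₗ[S] N ⊗[R] QuotSMulTop x M :=
        Submodule.quotEquivOfEq _ _ (by
            rw [Ideal.map_span, Set.image_singleton, Submodule.ideal_span_singleton_smul]) ≪≫ₗ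
          quotientSMulTopTensorEquiv (Ideal.span {x}) ≪≫ₗ
          AlgebraTensorModule.congr (LinearEquiv.refl S N)
            (Submodule.quotEquivOfEq _ _ (Submodule.ideal_span_singleton_smul _ _))
      rw [Module.supportDim_eq_of_equiv e] at h₂
      have h₃ := ih (M := QuotSMulTop x M) (by
        rw [← h₁] at hd
        exact lt_of_add_lt_add_right (by exact_mod_cast hd))
      rw [← h₁, add_right_comm]
      exact h₂.trans (by gcongr)

end LocalAlgebra

section Depth

open RingTheory.Sequence IsLocalRing

lemma length_le_localDepth {R : Type u} [CommRing R] [IsLocalRing R] {M : Type v} [AddCommGroup M]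
    [Module R M] {rs : List R} (hmem : ∀ r ∈ rs, r ∈ maximalIdeal R) (h : IsRegular M rs) :
    (rs.length : ℕ∞) ≤ localDepth R M :=
  le_sSup ⟨rs, rfl, hmem, h⟩

lemma exists_isRegular_of_le_localDepth {R : Type u} [CommRing R] [IsLocalRing R] {M : Type v}
    [AddCommGroup M] [Module R M] [Nontrivial M] {k : ℕ} (h : (k : ℕ∞) ≤ localDepth R M) :
    ∃ rs : List R, k ≤ rs.length ∧ (∀ r ∈ rs, r ∈ maximalIdeal R) ∧ IsRegular M rs := by
  cases k with
  | zero => exact ⟨[], le_rfl, by simp, IsRegular.nil R M⟩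
  | succ k =>
    obtain ⟨_, ⟨rs, rfl, hmem, hreg⟩, hlt⟩ :=
      lt_sSup_iff.mp (lt_of_lt_of_le (Nat.cast_lt.mpr k.lt_succ_self) h)
    exact ⟨rs, Nat.cast_lt.mp hlt, hmem, hreg⟩

lemma localDepth_eq_of_equiv {R : Type u} [CommRing R] [IsLocalRing R] {M : Type v} {M' : Type w}
    [AddCommGroup M] [Module R M] [AddCommGroup M'] [Module R M'] (e : M ≃ₗ[R] M') :
    localDepth R M = localDepth R M' := by
  simp only [localDepth, idealDepth, e.isRegular_congr]

section Surjective

variable {S : Type u} {T : Type v} [CommRing S] [CommRing T] [Algebra S T] {F : Type w}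
  [AddCommGroup F] [Module S F] [Module T F] [IsScalarTower S T F]

lemma localDepth_le_of_surjective [IsLocalRing S] [IsLocalRing T]
    [Module.Finite S F] [Nontrivial F] (h : Function.Surjective (algebraMap S T)) :
    localDepth T F ≤ localDepth S F := by
  refine sSup_le ?_
  rintro _ ⟨rs, rfl, hmem, hreg⟩
  obtain ⟨ss, rfl⟩ := List.map_surjective_iff.mpr h rs
  rw [List.length_map]
  have hss : ∀ s ∈ ss, s ∈ maximalIdeal S := fun s hs hu ↦
    hmem _ (List.mem_map_of_mem hs) (hu.map _)
  exact length_le_localDepth hss (.of_isWeaklyRegular_of_mem_maximalIdeal _ hss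
    ((isWeaklyRegular_map_algebraMap_iff T F ss).mp hreg.1))

lemma supportDim_le_of_surjective_algebraMap [Module.Finite T F]
    (h : Function.Surjective (algebraMap S T)) :
    Module.supportDim S F ≤ Module.supportDim T F := by
  have := Module.Finite.of_surjective (Algebra.linearMap S T) h
  have : Module.Finite S F := .trans T F
  rw [Module.supportDim_eq_ringKrullDim_quotient_annihilator,
    Module.supportDim_eq_ringKrullDim_quotient_annihilator]
  have hcomap : Module.annihilator S F = (Module.annihilator T F).comap (algebraMap S T) :=
    Module.comap_annihilator.symm
  let f := Ideal.quotientMap (Module.annihilator T F) (algebraMap S T) hcomap.le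
  exact (RingEquiv.ofBijective f ⟨Ideal.quotientMap_injective' hcomap.ge,
    Ideal.quotientMap_surjective h⟩).ringKrullDim.le

end Surjective

variable {R : Type u} {S : Type v} [CommRing R] [CommRing S] [Algebra R S]
  [IsLocalRing R] [IsNoetherianRing R] [IsLocalRing S] [IsNoetherianRing S]
  [IsLocalHom (algebraMap R S)]
  {M : Type*} [AddCommGroup M] [Module R M] [Module.Finite R M]
  {N : Type*} [AddCommGroup N] [Module R N] [Module S N] [IsScalarTower R S N]
  [Module.Finite S N] [Module.Flat R N]

lemma add_le_localDepth_tensor [Nontrivial M] [Nontrivial (N ⊗[R] M)]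
    [Nontrivial (N ⊗[R] (R ⧸ maximalIdeal R))] {k l : ℕ} (hk : k ≤ localDepth R M)
    (hl : l ≤ localDepth S (N ⊗[R] (R ⧸ maximalIdeal R))) :
    ((k + l : ℕ) : ℕ∞) ≤ localDepth S (N ⊗[R] M) := by
  obtain ⟨xs, hxk, hxmem, hxs⟩ := exists_isRegular_of_le_localDepth hk
  obtain ⟨ys, hyl, hymem, hys⟩ := exists_isRegular_of_le_localDepth hl
  have := finite_tensor (R := R) (S := S) (M := M) (N := N)
  have hmem : ∀ z ∈ ys ++ xs.map (algebraMap R S), z ∈ maximalIdeal S := by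
    intro z hz
    rcases List.mem_append.mp hz with hz | hz
    · exact hymem z hz
    · obtain ⟨x, hx, rfl⟩ := List.mem_map.mp hz
      exact map_nonunit (algebraMap R S) x (hxmem x hx)
  refine le_trans ?_ (length_le_localDepth hmem
    (.of_isWeaklyRegular_of_mem_maximalIdeal _ hmem (isWeaklyRegular_tensor hys.1 hxs.1)))
  rw [List.length_append, List.length_map, Nat.cast_le]
  lia

lemma exists_nat_eq_min {a : WithBot ℕ∞} (ha : 0 ≤ a) (n : ℕ) :
    ∃ k : ℕ, (k : WithBot ℕ∞) = min (n : WithBot ℕ∞) a := by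
  rcases le_total (n : WithBot ℕ∞) a with h | h
  · exact ⟨n, (min_eq_left h).symm⟩
  · rw [min_eq_right h]
    cases a using WithBot.recBotCoe with
    | bot => simp at ha
    | coe a =>
      lift a to ℕ using ne_top_of_le_ne_top (ENat.natCast_ne_top n) (WithBot.coe_le_coe.mp h)
      exact ⟨a, rfl⟩

theorem min_supportDim_tensor_le_localDepth_add_one {n : ℕ} [Nontrivial M] [Nontrivial (N ⊗[R] M)]
    [Nontrivial (N ⊗[R] (R ⧸ maximalIdeal R))]
    (hM : min (n : WithBot ℕ∞) (Module.supportDim R M) ≤ localDepth R M)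
    (hF : min (n : WithBot ℕ∞) (Module.supportDim S (N ⊗[R] (R ⧸ maximalIdeal R))) ≤
      localDepth S (N ⊗[R] (R ⧸ maximalIdeal R))) :
    min ((n + 1 : ℕ) : WithBot ℕ∞) (Module.supportDim S (N ⊗[R] M)) ≤
      localDepth S (N ⊗[R] M) + 1 := by
  have h := supportDim_tensor_le (R := R) (S := S) (M := M) (N := N)
  obtain ⟨k, hk⟩ := exists_nat_eq_min (a := Module.supportDim R M)
    (Order.krullDim_nonneg_iff.mpr Module.nonempty_support_of_nontrivial.to_subtype) n
  obtain ⟨l, hl⟩ := exists_nat_eq_min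
    (a := Module.supportDim S (N ⊗[R] (R ⧸ maximalIdeal R)))
    (Order.krullDim_nonneg_iff.mpr Module.nonempty_support_of_nontrivial.to_subtype) n
  have hkl := add_le_localDepth_tensor (WithBot.coe_le_coe.mp (hk.trans_le hM))
    (WithBot.coe_le_coe.mp (hl.trans_le hF))
  refine le_trans ?_ (add_le_add_left (WithBot.coe_le_coe.mpr hkl) 1)
  change _ ≤ ((k + l : ℕ) : WithBot ℕ∞) + 1
  rcases le_total (n : WithBot ℕ∞) (Module.supportDim R M) with ha | ha
  · rw [min_eq_left ha, Nat.cast_inj] at hk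
    exact (min_le_left _ _).trans (by norm_cast; lia)
  rcases le_total (n : WithBot ℕ∞)
    (Module.supportDim S (N ⊗[R] (R ⧸ maximalIdeal R))) with hb | hb
  · rw [min_eq_left hb, Nat.cast_inj] at hl
    exact (min_le_left _ _).trans (by norm_cast; lia)
  rw [min_eq_right ha] at hk
  rw [min_eq_right hb] at hl
  rw [← hk, ← hl] at h
  exact (min_le_right _ _).trans (h.trans (by norm_cast; lia))

end Depth

section BaseChange

/-- Base change of a tensor product is the tensor product of the base changes. -/
noncomputable def tensorBaseChangeEquiv {A B R S : Type*} [CommRing A] [CommRing B] [CommRing R]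
    [CommRing S] [Algebra A B] [Algebra A R] [Algebra A S] [Algebra B S] [Algebra R S]
    [IsScalarTower A B S] [IsScalarTower A R S]
    {M M' N N' : Type*} [AddCommGroup M] [Module A M] [AddCommGroup M'] [Module A M'] [Module R M']
    [IsScalarTower A R M'] [AddCommGroup N] [Module A N] [Module B N] [IsScalarTower A B N]
    [AddCommGroup N'] [Module A N'] [Module B N'] [Module R N'] [Module S N']
    [IsScalarTower A R N'] [IsScalarTower A S N'] [IsScalarTower B S N'] [IsScalarTower R S N']
    {f : M →ₗ[A] M'} {g : N →ₗ[B] N'} (hf : IsBaseChange R f) (hg : IsBaseChange S g) :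
    S ⊗[B] (N ⊗[A] M) ≃ₗ[S] N' ⊗[R] M' :=
  (AlgebraTensorModule.assoc A B S S N M).symm ≪≫ₗ
    AlgebraTensorModule.congr hg.equiv (LinearEquiv.refl A M) ≪≫ₗ
    (AlgebraTensorModule.cancelBaseChange A R S N' M).symm ≪≫ₗ
    AlgebraTensorModule.congr (LinearEquiv.refl S N') hf.equiv

lemma IsBaseChange.flat_of_flat {A B S : Type*} [CommRing A] [CommRing B] [CommRing S]
    [Algebra A B] [Algebra A S] [Algebra B S] [IsScalarTower A B S] [Module.Flat B S]
    {N N' : Type*} [AddCommGroup N] [Module A N] [Module B N] [IsScalarTower A B N]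
    [Module.Flat A N] [AddCommGroup N'] [Module A N'] [Module B N'] [Module S N']
    [IsScalarTower A S N'] [IsScalarTower B S N'] {g : N →ₗ[B] N'} (hg : IsBaseChange S g) :
    Module.Flat A N' := by
  have : Module.Flat A (S ⊗[B] N) := by
    refine Module.Flat.iff_lTensor_injective'.mpr fun I ↦ ?_
    let j := AlgebraTensorModule.lTensor B N I.subtype
    have hj : Function.Injective j :=
      Module.Flat.lTensor_preserves_injective_linearMap I.subtype I.injective_subtype
    have hcomm : (AlgebraTensorModule.assoc A B S S N A).toLinearMap ∘ₗ
        AlgebraTensorModule.lTensor S (S ⊗[B] N) I.subtype =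
        AlgebraTensorModule.lTensor S S j ∘ₗ
          (AlgebraTensorModule.assoc A B S S N I).toLinearMap := by
      ext
      simp [j]
    have h := (Module.Flat.lTensor_preserves_injective_linearMap (M := S) j hj).comp
      (AlgebraTensorModule.assoc A B S S N I).injective
    have h' : Function.Injective (AlgebraTensorModule.lTensor S S j ∘ₗ
          (AlgebraTensorModule.assoc A B S S N I).toLinearMap) := h
    rw [← hcomm, LinearMap.coe_comp] at h'
    exact h'.of_comp
  exact Module.Flat.of_linearEquiv (hg.equiv.restrictScalars A).symm

/-- If `S → T` is surjective with kernel `I`, the base change to `T` is the reduction modulo `I`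
of the base change to `S`. -/
noncomputable def IsBaseChange.quotientEquiv {B S T : Type*} [CommRing B] [CommRing S] [CommRing T]
    [Algebra B S] [Algebra B T] [Algebra S T] [IsScalarTower B S T]
    {N N' F : Type*} [AddCommGroup N] [Module B N] [AddCommGroup N'] [Module B N'] [Module S N']
    [IsScalarTower B S N'] [AddCommGroup F] [Module B F] [Module S F] [Module T F]
    [IsScalarTower B T F] [IsScalarTower S T F]
    {g : N →ₗ[B] N'} {f : N →ₗ[B] F} (hg : IsBaseChange S g) (hf : IsBaseChange T f)
    (hsurj : Function.Surjective (algebraMap S T)) {I : Ideal S}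
    (hI : RingHom.ker (algebraMap S T) = I) :
    (N' ⧸ (I • ⊤ : Submodule S N')) ≃ₗ[S] F :=
  (quotTensorEquivQuotSMul N' I).symm ≪≫ₗ
    AlgebraTensorModule.congr
      (Submodule.quotEquivOfEq I (LinearMap.ker (Algebra.linearMap S T)) hI.symm ≪≫ₗ
        (Algebra.linearMap S T).quotKerEquivOfSurjective hsurj) hg.equiv.symm ≪≫ₗ
    (AlgebraTensorModule.cancelBaseChange B S S T N) ≪≫ₗ
    hf.equiv.restrictScalars S

end BaseChange

lemma exists_primeSpectrum_quotient_localization {B : Type*} [CommRing B] {W : Submonoid B}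
    {q I : Ideal B} [q.IsPrime] (hW : W ≤ q.primeCompl) (hI : I ≤ q)
    {J : Ideal (Localization W)} (hJ : J = I.map (algebraMap B (Localization W))) :
    ∃ (Q : PrimeSpectrum (Localization W ⧸ J))
      (φ : Localization.AtPrime q →+* Localization.AtPrime Q.asIdeal),
      Function.Surjective φ ∧
      RingHom.ker φ = I.map (algebraMap B (Localization.AtPrime q)) ∧
      φ.comp (algebraMap B (Localization.AtPrime q)) =
        (algebraMap (Localization W ⧸ J) (Localization.AtPrime Q.asIdeal)).comp
          ((Ideal.Quotient.mk J).comp (algebraMap B (Localization W))) := by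
  let L := Localization W
  let S := Localization.AtPrime q
  let _ : Algebra L S := IsLocalization.localizationAlgebraOfSubmonoidLe L S W q.primeCompl hW
  have : IsScalarTower B L S :=
    IsLocalization.localization_isScalarTower_of_submonoid_le L S W q.primeCompl hW
  have := IsLocalization.isLocalization_of_submonoid_le L S W q.primeCompl hW
  let K : Ideal S := I.map (algebraMap B S)
  have hJK : J.map (algebraMap L S) = K := by
    rw [hJ, Ideal.map_map, ← IsScalarTower.algebraMap_eq]
  have hK : K ≠ ⊤ := fun h ↦ (IsLocalRing.maximalIdeal.isMaximal S).ne_top <| by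
    rw [eq_top_iff, ← h, ← Localization.AtPrime.map_eq_maximalIdeal]
    exact Ideal.map_mono hI
  have : Nontrivial (S ⧸ K) := Ideal.Quotient.nontrivial_iff.mpr hK
  have : IsLocalRing (S ⧸ K) := .of_surjective' _ Ideal.Quotient.mk_surjective
  let _ : Algebra (L ⧸ J) (S ⧸ K) :=
    (Ideal.quotientMap K (algebraMap L S) (Ideal.map_le_iff_le_comap.mp hJK.le)).toAlgebra
  have hloc := IsLocalization.of_surjective (q.primeCompl.map (algebraMap B L)) S
    (Ideal.Quotient.mk J) Ideal.Quotient.mk_surjective (Ideal.Quotient.mk K)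
    Ideal.Quotient.mk_surjective (RingHom.ext fun _ ↦ rfl) (by simp [hJK])
  let Q : PrimeSpectrum (L ⧸ J) := PrimeSpectrum.comap (algebraMap (L ⧸ J) (S ⧸ K))
    (IsLocalRing.closedPoint (S ⧸ K))
  have : IsLocalization.AtPrime (S ⧸ K) Q.asIdeal := by
    refine IsLocalization.of_le (Submonoid.map (Ideal.Quotient.mk J)
      (q.primeCompl.map (algebraMap B L))) _
      (fun x hx h ↦ h (IsLocalization.map_units (S ⧸ K) ⟨x, hx⟩))
      fun x hx ↦ ?_
    by_contra h
    exact hx h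
  let e : (S ⧸ K) ≃ₐ[L ⧸ J] Localization.AtPrime Q.asIdeal :=
    IsLocalization.algEquiv Q.asIdeal.primeCompl _ _
  refine ⟨Q, (e : (S ⧸ K) →+* _).comp (Ideal.Quotient.mk K),
    e.surjective.comp Ideal.Quotient.mk_surjective, ?_, ?_⟩
  · ext x
    rw [RingHom.mem_ker, RingHom.comp_apply, RingHom.coe_coe, map_eq_zero_iff e e.injective,
      Ideal.Quotient.eq_zero_iff_mem]
  · ext b
    refine (congrArg e ?_).trans (e.commutes (Ideal.Quotient.mk J (algebraMap B L b)))
    change _ = Ideal.Quotient.mk K (algebraMap L S (algebraMap B L b))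
    rw [← IsScalarTower.algebraMap_apply]

lemma isBaseChange_mkQ_smul_top {R M : Type*} [CommRing R] [AddCommGroup M] [Module R M]
    (I : Ideal R) : IsBaseChange (R ⧸ I) (I • ⊤ : Submodule R M).mkQ :=
  .of_equiv ((quotTensorEquivQuotSMul M I).extendScalarsOfSurjective
    Ideal.Quotient.mk_surjective) fun x ↦ by
      change quotTensorEquivQuotSMul M I (Ideal.Quotient.mk I 1 ⊗ₜ x) = _
      rw [quotTensorEquivQuotSMul_mk_tmul, one_smul]
      rfl

section Fiber

variable {A B : Type u} [CommRing A] [CommRing B] [Algebra A B] (P : PrimeSpectrum A)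
  (N : Type u) [AddCommGroup N] [Module B N]

noncomputable instance : Algebra B (fiberRing A B P) :=
  inferInstanceAs (Algebra B (Localization (fiberSubmonoid A B P) ⧸ fiberIdeal A B P))

noncomputable instance : Module B (fiberModule A B P N) :=
  inferInstanceAs (Module B (LocalizedModule (fiberSubmonoid A B P) N ⧸
    (fiberIdeal A B P • (⊤ : Submodule (Localization (fiberSubmonoid A B P))
      (LocalizedModule (fiberSubmonoid A B P) N)))))

instance : IsScalarTower B (fiberRing A B P) (fiberModule A B P N) :=
  inferInstanceAs (IsScalarTower B (Localization (fiberSubmonoid A B P) ⧸ fiberIdeal A B P)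
    (LocalizedModule (fiberSubmonoid A B P) N ⧸
      (fiberIdeal A B P • (⊤ : Submodule (Localization (fiberSubmonoid A B P))
        (LocalizedModule (fiberSubmonoid A B P) N)))))

/-- The canonical map from a module to its fiber module. -/
noncomputable def toFiberModule : N →ₗ[B] fiberModule A B P N :=
  (fiberIdeal A B P • (⊤ : Submodule (Localization (fiberSubmonoid A B P))
    (LocalizedModule (fiberSubmonoid A B P) N))).mkQ.restrictScalars B ∘ₗ
      LocalizedModule.mkLinearMap (fiberSubmonoid A B P) N

lemma isBaseChange_toFiberModule :
    IsBaseChange (fiberRing A B P) (toFiberModule (A := A) (B := B) P N) :=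
  have h := (IsLocalizedModule.isBaseChange (fiberSubmonoid A B P)
    (Localization (fiberSubmonoid A B P))
    (LocalizedModule.mkLinearMap (fiberSubmonoid A B P) N)).comp
    (isBaseChange_mkQ_smul_top (fiberIdeal A B P))
  h

instance [Module.Finite B N] : Module.Finite (fiberRing A B P) (fiberModule A B P N) :=
  .equiv (isBaseChange_toFiberModule (A := A) (B := B) P N).equiv

lemma exists_primeSpectrum_fiberRing (Q : PrimeSpectrum B) :
    ∃ (Q' : PrimeSpectrum (fiberRing A B (Q.comap (algebraMap A B))))
      (φ : Localization.AtPrime Q.asIdeal →+* Localization.AtPrime Q'.asIdeal),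
      Function.Surjective φ ∧
      RingHom.ker φ = (Q.comap (algebraMap A B)).asIdeal.map
        (algebraMap A (Localization.AtPrime Q.asIdeal)) ∧
      φ.comp (algebraMap B (Localization.AtPrime Q.asIdeal)) =
        algebraMap B (Localization.AtPrime Q'.asIdeal) := by
  obtain ⟨Q', φ, h₁, h₂, h₃⟩ := exists_primeSpectrum_quotient_localization
    (W := fiberSubmonoid A B (Q.comap (algebraMap A B))) (q := Q.asIdeal)
    (I := (Q.comap (algebraMap A B)).asIdeal.map (algebraMap A B))
    (J := fiberIdeal A B (Q.comap (algebraMap A B)))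
    (by rintro _ ⟨a, ha, rfl⟩; exact ha) Ideal.map_comap_le (Ideal.map_map _ _).symm
  rw [Ideal.map_map, ← IsScalarTower.algebraMap_eq] at h₂
  exact ⟨Q', φ, h₁, h₂, h₃⟩

end Fiber

section Localization

open IsLocalRing

lemma nontrivial_tensor_residue {R S N : Type*} [CommRing R] [CommRing S] [Algebra R S]
    [IsLocalRing R] [IsLocalRing S] [IsLocalHom (algebraMap R S)] [AddCommGroup N] [Module R N]
    [Module S N] [IsScalarTower R S N] [Module.Finite S N] [Nontrivial N] :
    Nontrivial (N ⊗[R] (R ⧸ maximalIdeal R)) := by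
  let e := quotientTensorFiberEquiv (R := R) (S := S) (N := N) (maximalIdeal R)
  refine e.symm.toEquiv.nontrivial_congr.mpr
    (Submodule.Quotient.nontrivial_iff.mpr
      (Submodule.top_ne_ideal_smul_of_le_jacobson_annihilator ?_).symm)
  refine le_trans (Ideal.map_le_iff_le_comap.mpr fun r hr ↦ ?_) (maximalIdeal_le_jacobson _)
  exact map_nonunit (algebraMap R S) r hr

variable {A B : Type u} [CommRing A] [CommRing B] [IsNoetherianRing A] [IsNoetherianRing B]
    [Algebra A B] {n : ℕ}
    {M : Type u} [AddCommGroup M] [Module A M] [Module.Finite A M]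
    {N : Type u} [AddCommGroup N] [Module A N] [Module B N] [IsScalarTower A B N]
    [Module.Finite B N] [Module.Flat A N]

theorem min_heightAt_le_depthAt_add_one_of_equiv {X : Type u} [AddCommGroup X] [Module B X]
    (e : X ≃ₗ[B] N ⊗[A] M) (hM : SerreCondS A n M)
    (hfib : ∀ P ∈ Module.support A M, SerreCondS (fiberRing A B P) n (fiberModule A B P N))
    {Q : PrimeSpectrum B} (hQ : Q ∈ Module.support B X) :
    min ((n + 1 : ℕ) : WithBot ℕ∞) (heightAt B X Q) ≤ depthAt B X Q + 1 := by
  let P := Q.comap (algebraMap A B)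
  let R := Localization.AtPrime P.asIdeal
  let S := Localization.AtPrime Q.asIdeal
  let M' := LocalizedModule P.asIdeal.primeCompl M
  let N' := LocalizedModule Q.asIdeal.primeCompl N
  let X' := LocalizedModule Q.asIdeal.primeCompl X
  let ψ : R →+* S := Localization.localRingHom P.asIdeal Q.asIdeal (algebraMap A B) rfl
  let _ : Algebra R S := ψ.toAlgebra
  have : IsLocalHom (algebraMap R S) := Localization.isLocalHom_localRingHom _ _ _ rfl
  have : IsScalarTower A R S := .of_algebraMap_eq fun a ↦
    (Localization.localRingHom_to_map P.asIdeal Q.asIdeal (algebraMap A B) rfl a).symm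
  let _ : Module R N' := .compHom N' ψ
  have : IsScalarTower R S N' := ⟨fun r s x ↦ mul_smul (ψ r) s x⟩
  have : IsScalarTower A R N' := .to₁₂₄ A R S N'
  have hM' : IsBaseChange R (LocalizedModule.mkLinearMap P.asIdeal.primeCompl M) :=
    IsLocalizedModule.isBaseChange P.asIdeal.primeCompl R _
  have hN' : IsBaseChange S (LocalizedModule.mkLinearMap Q.asIdeal.primeCompl N) :=
    IsLocalizedModule.isBaseChange Q.asIdeal.primeCompl S _
  have hX' : IsBaseChange S (LocalizedModule.mkLinearMap Q.asIdeal.primeCompl X) :=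
    IsLocalizedModule.isBaseChange Q.asIdeal.primeCompl S _
  let eX : X' ≃ₗ[S] N' ⊗[R] M' := hX'.equiv.symm ≪≫ₗ
    AlgebraTensorModule.congr (LinearEquiv.refl S S) e ≪≫ₗ tensorBaseChangeEquiv hM' hN'
  have : Module.Flat B S := IsLocalization.flat S Q.asIdeal.primeCompl
  have : Module.Flat A N' := hN'.flat_of_flat
  have : Module.Flat R N' := (Module.flat_iff_of_isLocalization R P.asIdeal.primeCompl N').mpr this
  have : Nontrivial X' := hQ
  have : Nontrivial (N' ⊗[R] M') := eX.symm.toEquiv.nontrivial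
  have : Nontrivial M' := by
    by_contra h
    rw [not_nontrivial_iff_subsingleton] at h
    exact not_subsingleton (N' ⊗[R] M') inferInstance
  have : Nontrivial N' := by
    by_contra h
    rw [not_nontrivial_iff_subsingleton] at h
    exact not_subsingleton (N' ⊗[R] M') inferInstance
  have := nontrivial_tensor_residue (R := R) (S := S) (N := N')
  obtain ⟨Q', φ, hφ, hker, hcomp⟩ := exists_primeSpectrum_fiberRing (A := A) Q
  let T := Localization.AtPrime Q'.asIdeal
  let F := LocalizedModule Q'.asIdeal.primeCompl (fiberModule A B P N)
  let _ : Algebra S T := φ.toAlgebra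
  have : IsScalarTower B S T := .of_algebraMap_eq' hcomp.symm
  let _ : Module S F := .compHom F φ
  have : IsScalarTower S T F := ⟨fun s t x ↦ mul_smul (φ s) t x⟩
  have hF : IsBaseChange T ((LocalizedModule.mkLinearMap Q'.asIdeal.primeCompl
      (fiberModule A B P N)).restrictScalars B ∘ₗ toFiberModule P N) :=
    (isBaseChange_toFiberModule P N).comp
      (IsLocalizedModule.isBaseChange Q'.asIdeal.primeCompl T _)
  have hkerT : RingHom.ker (algebraMap S T) = (maximalIdeal R).map (algebraMap R S) := by
    rw [← Localization.AtPrime.map_eq_maximalIdeal, Ideal.map_map,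
      ← IsScalarTower.algebraMap_eq]
    exact hker
  let eF : N' ⊗[R] (R ⧸ maximalIdeal R) ≃ₗ[S] F :=
    (quotientTensorFiberEquiv (maximalIdeal R)).symm ≪≫ₗ hN'.quotientEquiv hF hφ hkerT
  have : Nontrivial F := eF.symm.toEquiv.nontrivial
  have : Module.Finite S F := .equiv (hN'.quotientEquiv hF hφ hkerT)
  have hFT : min (n : WithBot ℕ∞) (Module.supportDim T F) ≤ localDepth T F :=
    hfib P ‹Nontrivial M'› Q' ‹Nontrivial F›
  have := min_supportDim_tensor_le_localDepth_add_one (S := S) (M := M') (N := N')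
    (hM P ‹Nontrivial M'›) (n := n) (by
      rw [Module.supportDim_eq_of_equiv eF, localDepth_eq_of_equiv eF]
      exact (min_le_min_left _ (supportDim_le_of_surjective_algebraMap hφ)).trans
        (hFT.trans (WithBot.coe_le_coe.mpr (localDepth_le_of_surjective hφ))))
  rwa [← Module.supportDim_eq_of_equiv eX, ← localDepth_eq_of_equiv eX] at this

end Localization

theorem tensor_condC_succ_of_serreS_base_and_fibers (A B : Type u) [CommRing A] [CommRing B] [IsNoetherianRing A] [IsNoetherianRing B]
    [Algebra A B] (n : ℕ)
    (M : Type u) [AddCommGroup M] [Module A M] [Module.Finite A M]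
    (N : Type u) [AddCommGroup N] [Module A N] [Module B N] [IsScalarTower A B N]
    [Module.Finite B N] [Module.Flat A N]
    (hM : SerreCondS A n M)
    (hfib : ∀ P ∈ Module.support A M, SerreCondS (fiberRing A B P) n (fiberModule A B P N)) :
    CondC B (n + 1) (M ⊗[A] N) := by
  let e : M ⊗[A] N ≃ₗ[B] N ⊗[A] M :=
    { TensorProduct.comm A M N with
      map_smul' := fun b x ↦ (TensorProduct.comm A M N).apply_symm_apply _ }
  exact fun Q hQ ↦ min_heightAt_le_depthAt_add_one_of_equiv e hM hfib hQ

end
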